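/- arXiv:1303.0697 — 2 statements merged into one kernel-verified Lean document; each statement's English description precedes it below -/
import Mathlib

section
/- Let R be a ring and n ≥ 1 such that every right R-module N with Nⁿ ≅ Rⁿ satisfies N ≅ R. Then the map sending an anti-endomorphism γ of R to the anti-endomorphism T_nγ of Matₙ(R) induces a bijection between the set of orbits of anti-endomorphisms of R under left composition with inner automorphisms of R and the corresponding set of orbits for Matₙ(R), and this bijection restricts to a bijection between anti-automorphism orbits. In particular, R admits an anti-automorphism if and only if Matₙ(R) does; moreover, if R admits an anti-automorphism, then there is a group isomorphism Out(R) ≅ Out(Matₙ(R)) sending the class of φ ∈ Aut(R) to the class of the entrywise automorphism (r_{ij}) ↦ (φ(r_{ij})) of Matₙ(R). -/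
/-!
The orbit bijection is a Skolem–Noether type statement. An anti-endomorphism `β` of `Matₙ(R)`
carries the standard matrix units `e_{ij}` to a system `f_{ij} = β(e_{ji})` of `n × n` matrix
units. The right module `N = f_{00} Rⁿ` satisfies `Nⁿ ≅ Rⁿ`, through `v ↦ (f_{0i} v)_i`, so the
cancellation hypothesis gives `N ≅ R`. Such an isomorphism factors `f_{00}` as a column `x` times a
row `y` with `y x = 1`; the matrix with columns `f_{i0} x` is then invertible, with inverse the
matrix with rows `y f_{0i}`, and it conjugates `e_{ij}` to `f_{ij}` (`units_conj`). After correcting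
`β` by this conjugation, the image of a scalar matrix commutes with all `e_{ij}`, hence is scalar,
and so `β` becomes `T_nγ` (`exists_conj_map`, `antiEndo_eq_conj`). The same argument shows that an
automorphism of `Matₙ(R)` is inner up to an entrywise automorphism (`ringAut_eq_conj`).

Injectivity, on orbits and on `Out`, comes from the fact that a unit `U` which conjugates one
entrywise map to another commutes with the `e_{ij}`, so it is a scalar matrix `u I` with `u` a unit
of `R` (`descend_conj`). The isomorphism on `Out` needs no anti-automorphism of `R`.
-/

universe u

/-- An anti-endomorphism of a ring: additive, unital, reverses multiplication. -/
def IsAntiEndo {W : Type*} [Ring W] (α : W → W) : Prop :=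
  (∀ u v : W, α (u + v) = α u + α v) ∧ α 1 = 1 ∧ ∀ u v : W, α (u * v) = α v * α u

/-- An anti-automorphism of a ring: a bijective anti-endomorphism. -/
def IsAntiAuto {W : Type*} [Ring W] (α : W → W) : Prop :=
  IsAntiEndo α ∧ Function.Bijective α

/-- An inner automorphism of a ring: conjugation by a unit. -/
def IsInnerAut {W : Type*} [Ring W] (φ : W → W) : Prop :=
  ∃ u : Wˣ, ∀ w : W, φ w = ↑u * w * ↑u⁻¹

/-- `T_nγ`: transpose followed by entrywise application of `γ`. -/
def Tn {R : Type u} [Ring R] {n : ℕ} (γ : R → R) (A : Matrix (Fin n) (Fin n) R) :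
    Matrix (Fin n) (Fin n) R :=
  Matrix.of fun i j => γ (A j i)

/-- The subgroup of inner automorphisms of a ring `S`. -/
def innerAuts (S : Type*) [Ring S] : Subgroup (RingAut S) where
  carrier := {φ | ∃ u : Sˣ, ∀ s : S, φ s = ↑u * s * ↑u⁻¹}
  one_mem' := ⟨1, fun s => by show s = ↑(1 : Sˣ) * s * ↑(1 : Sˣ)⁻¹; simp⟩
  mul_mem' := by
    rintro φ ψ ⟨u, hu⟩ ⟨v, hv⟩
    refine ⟨u * v, fun s => ?_⟩
    show φ (ψ s) = _
    rw [hv, hu]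
    simp [mul_assoc]
  inv_mem' := by
    rintro φ ⟨u, hu⟩
    refine ⟨u⁻¹, fun s => ?_⟩
    apply φ.injective
    rw [show φ ((φ⁻¹ : RingAut S) s) = s from φ.apply_symm_apply s, hu]
    simp [mul_assoc]

/-- The subgroup of inner automorphisms is normal. -/
theorem innerAuts_normal (S : Type*) [Ring S] : (innerAuts S).Normal := by
  constructor
  rintro φ ⟨u, hu⟩ g
  refine ⟨Units.map g.toRingHom.toMonoidHom u, fun s => ?_⟩
  show g (φ ((g⁻¹ : RingAut S) s)) = _
  rw [hu]
  simp only [map_mul, Units.coe_map, Units.coe_map_inv, RingEquiv.toRingHom_eq_coe]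
  rw [show g ((g⁻¹ : RingAut S) s) = s from g.apply_symm_apply s]
  rfl

/-! ### Conjugacy of matrix units -/

open Matrix in
/-- Under the cancellation hypothesis, every full system of `n × n` matrix units in `Matₙ(R)` is
conjugate to the standard one. -/
theorem units_conj {R : Type u} [Ring R] (n : ℕ) [NeZero n]
    (hR : ∀ (N : Type u) (_ : AddCommGroup N) (_ : Module Rᵐᵒᵖ N),
      ((Fin n → N) ≃ₗ[Rᵐᵒᵖ] (Fin n → R)) → Nonempty (N ≃ₗ[Rᵐᵒᵖ] R))
    (f : Fin n → Fin n → Matrix (Fin n) (Fin n) R)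
    (hf : ∀ i j k l, f i j * f k l = if j = k then f i l else 0)
    (h1 : ∑ i, f i i = 1) :
    ∃ P : (Matrix (Fin n) (Fin n) R)ˣ, ∀ i j, f i j = P.val * single i j 1 * P⁻¹.val := by
  -- `N = f 0 0 Rⁿ`, described as the fixed vectors of the idempotent `f 0 0`
  let N : Submodule Rᵐᵒᵖ (Fin n → R) :=
    { carrier := {v | f 0 0 *ᵥ v = v}
      add_mem' := by
        intro a b ha hb
        simp only [Set.mem_ofPred_eq] at *
        rw [mulVec_add, ha, hb]
      zero_mem' := by simp
      smul_mem' := by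
        intro c x hx
        simp only [Set.mem_ofPred_eq] at *
        rw [mulVec_smul, hx] }
  have hN : ∀ v, v ∈ N ↔ f 0 0 *ᵥ v = v := fun v => Iff.rfl
  have hmem : ∀ i v, f 0 i *ᵥ v ∈ N := by
    intro i v
    rw [hN, mulVec_mulVec, hf, if_pos rfl]
  let E : (Fin n → N) ≃ₗ[Rᵐᵒᵖ] (Fin n → R) :=
    { toFun := fun w => ∑ i, f i 0 *ᵥ (w i : Fin n → R)
      map_add' := by
        intro a b
        simp [mulVec_add, Finset.sum_add_distrib]
      map_smul' := by
        intro c a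
        simp [mulVec_smul, Finset.smul_sum]
      invFun := fun v i => ⟨f 0 i *ᵥ v, hmem i v⟩
      left_inv := by
        intro w
        funext i
        apply Subtype.ext
        show f 0 i *ᵥ ∑ j, f j 0 *ᵥ (w j : Fin n → R) = w i
        rw [mulVec_sum, Finset.sum_eq_single i]
        · rw [mulVec_mulVec, hf, if_pos rfl]
          exact (w i).2
        · intro j _ hj
          rw [mulVec_mulVec, hf, if_neg (Ne.symm hj), zero_mulVec]
        · simp
      right_inv := by
        intro v
        simp only [mulVec_mulVec, hf, if_true]
        rw [← sum_mulVec, h1, one_mulVec] }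
  obtain ⟨θ⟩ := hR N inferInstance inferInstance E
  let x : Fin n → R := (θ.symm 1 : N)
  have hx : f 0 0 *ᵥ x = x := (θ.symm 1).2
  -- the row vector representing the right-linear functional `v ↦ θ (f 0 0 v)`
  let y : Fin n → R := fun k => θ ⟨f 0 0 *ᵥ Pi.single k 1, hmem 0 _⟩
  have hy : ∀ v, y ⬝ᵥ v = θ ⟨f 0 0 *ᵥ v, hmem 0 v⟩ := by
    intro v
    have : (⟨f 0 0 *ᵥ v, hmem 0 v⟩ : N) =
        ∑ k, MulOpposite.op (v k) • (⟨f 0 0 *ᵥ Pi.single k 1, hmem 0 _⟩ : N) := by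
      apply Subtype.ext
      simp only [Submodule.coe_sum, Submodule.coe_smul]
      ext i
      simp [mulVec, dotProduct, Finset.sum_apply]
    rw [this, map_sum]
    refine Finset.sum_congr rfl fun k _ => ?_
    rw [map_smul]
    rfl
  have hyx : y ⬝ᵥ x = 1 := by
    rw [hy]
    have : (⟨f 0 0 *ᵥ x, hmem 0 x⟩ : N) = θ.symm 1 := Subtype.ext hx
    rw [this, LinearEquiv.apply_symm_apply]
  -- `x (y v) = f 0 0 v`, because `θ.symm` is right-linear
  have hxy : vecMulVec x y = f 0 0 := by
    have key : ∀ v, MulOpposite.op (y ⬝ᵥ v) • x = f 0 0 *ᵥ v := by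
      intro v
      have h2 : MulOpposite.op (y ⬝ᵥ v) • (θ.symm 1 : N) = ⟨f 0 0 *ᵥ v, hmem 0 v⟩ := by
        rw [← map_smul, hy]
        simp
      exact congrArg Subtype.val h2
    ext i j
    have := congrFun (key (Pi.single j 1)) i
    simpa [vecMulVec_apply] using this
  -- the conjugating matrix `A`, with columns `f i 0 x`, and its inverse `B`, with rows `y f 0 i`
  let A : Matrix (Fin n) (Fin n) R := of fun k i => (f i 0 *ᵥ x) k
  let B : Matrix (Fin n) (Fin n) R := of fun i k => (y ᵥ* f 0 i) k
  have hBA : B * A = 1 := by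
    ext i j
    have : (B * A) i j = (y ᵥ* f 0 i) ⬝ᵥ (f j 0 *ᵥ x) := rfl
    rw [this, ← dotProduct_mulVec, mulVec_mulVec, hf, one_apply]
    split_ifs
    · rw [hx, hyx]
    · simp
  have hAB : A * B = 1 := by
    have : A * B = ∑ i, vecMulVec (f i 0 *ᵥ x) (y ᵥ* f 0 i) := by
      ext k l
      simp [Matrix.sum_apply, mul_apply, vecMulVec_apply, A, B]
    rw [this, ← h1]
    refine Finset.sum_congr rfl fun i _ => ?_
    rw [← vecMulVec_mul, ← mul_vecMulVec, hxy, hf, if_pos rfl, hf, if_pos rfl]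
  refine ⟨⟨A, B, hAB, hBA⟩, fun i j => ?_⟩
  have : f i j * A = A * single i j 1 := by
    ext k l
    have h3 : (f i j * A) k l = (f i j *ᵥ (f l 0 *ᵥ x)) k := rfl
    rw [h3, mulVec_mulVec, hf]
    by_cases h : j = l
    · subst h; simp [A]
    · simp [h, Matrix.mul_single_apply_of_ne, Ne.symm h]
  show f i j = A * single i j 1 * B
  rw [← this, mul_assoc, hAB, mul_one]

open Matrix in
/-- Common core of the endomorphism and anti-endomorphism cases: if `β` sends the standard matrix
units to matrix units that commute with the images of scalar matrices, and `r e_{ij}` to the product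
of the two images, then up to conjugation `β` acts entrywise. For an anti-endomorphism this is
applied to its composition with the transpose. -/
theorem exists_conj_map {R : Type u} [Ring R] (n : ℕ) [NeZero n]
    (hR : ∀ (N : Type u) (_ : AddCommGroup N) (_ : Module Rᵐᵒᵖ N),
      ((Fin n → N) ≃ₗ[Rᵐᵒᵖ] (Fin n → R)) → Nonempty (N ≃ₗ[Rᵐᵒᵖ] R))
    (β : Matrix (Fin n) (Fin n) R →+ Matrix (Fin n) (Fin n) R) (hone : β 1 = 1)
    (hunits : ∀ i j k l, β (single i j 1) * β (single k l 1) =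
      if j = k then β (single i l 1) else 0)
    (hl : ∀ i j r, β (single i j r) = β (single i j 1) * β (scalar (Fin n) r))
    (hr : ∀ i j r, β (single i j r) = β (scalar (Fin n) r) * β (single i j 1)) :
    ∃ (P : (Matrix (Fin n) (Fin n) R)ˣ) (γ : R → R), (∀ r s, γ (r + s) = γ r + γ s) ∧
      ∀ A, β A = P.val * A.map γ * P⁻¹.val := by
  have hsum : ∑ i, β (single i i 1) = 1 := by
    rw [← map_sum, ← hone]
    congr 1
    ext k l
    by_cases h : k = l <;> simp [Matrix.sum_apply, single_apply, one_apply, ite_and, h]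
  obtain ⟨P, hP⟩ := units_conj n hR (fun i j => β (single i j 1)) hunits hsum
  let C : R → Matrix (Fin n) (Fin n) R := fun r => P⁻¹.val * β (scalar (Fin n) r) * P.val
  have hβC : ∀ r, β (scalar (Fin n) r) = P.val * C r * P⁻¹.val := by
    intro r
    simp [C, mul_assoc]
  have hC : ∀ r, ∃ c, scalar (Fin n) c = C r := by
    intro r
    refine mem_range_scalar_iff_commute_single'.2 fun i j => ?_
    have h := (hl i j r).symm.trans (hr i j r)
    rw [hβC, hP] at h
    have h' := congrArg (fun X => P⁻¹.val * X * P.val) h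
    simpa [mul_assoc, Commute, SemiconjBy] using h'
  choose γ hγ using hC
  have hadd : ∀ r s, γ (r + s) = γ r + γ s := by
    intro r s
    apply (scalar_inj (n := Fin n)).1
    rw [map_add, hγ, hγ, hγ]
    simp only [C, map_add, mul_add, add_mul]
  have hzero : γ 0 = 0 := by simpa using hadd 0 0
  refine ⟨P, γ, hadd, fun A => ?_⟩
  induction A using Matrix.induction_on' with
  | h_zero => simp [Matrix.map_zero, hzero]
  | h_add p q hp hq =>
    rw [map_add, hp, hq, Matrix.map_add γ hadd, mul_add, add_mul]
  | h_std_basis i j r =>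
    have h1 : (single i j r).map γ = single i j 1 * scalar (Fin n) (γ r) := by
      ext k l
      simp [single_apply, apply_ite γ, hzero]
    rw [hl, hβC, hP, h1, hγ]
    simp [mul_assoc]

/-! ### Conjugation by scalar matrices -/

open Matrix in
theorem conj_scalar_apply {R : Type u} [Ring R] {n : ℕ} (u : Rˣ) (A : Matrix (Fin n) (Fin n) R)
    (i j : Fin n) :
    (scalar (Fin n) u.val * A * scalar (Fin n) u⁻¹.val) i j = u.val * A i j * u⁻¹.val := by
  simp [scalar_apply, diagonal_mul, mul_diagonal]

open Matrix in
theorem exists_conj_scalar {R : Type u} [Ring R] (n : ℕ) (u : Rˣ) :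
    ∃ U : (Matrix (Fin n) (Fin n) R)ˣ, ∀ (A : Matrix (Fin n) (Fin n) R) (i j : Fin n),
      (U.val * A * U⁻¹.val) i j = u.val * A i j * u⁻¹.val :=
  ⟨⟨scalar (Fin n) u.val, scalar (Fin n) u⁻¹.val,
    by rw [← map_mul, Units.mul_inv, map_one], by rw [← map_mul, Units.inv_mul, map_one]⟩,
    conj_scalar_apply u⟩

open Matrix in
/-- A unit of `Matₙ(R)` that commutes with the standard matrix units is `u I` for a unit `u` of
`R`; its inverse commutes with them too, hence is scalar as well. -/
theorem exists_scalar_unit {R : Type u} [Ring R] {n : ℕ} [NeZero n]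
    (U : (Matrix (Fin n) (Fin n) R)ˣ) (hU : ∀ i j, Commute (single i j 1) U.val) :
    ∃ u : Rˣ, U.val = scalar (Fin n) u.val ∧ U⁻¹.val = scalar (Fin n) u⁻¹.val := by
  obtain ⟨a, ha⟩ := mem_range_scalar_iff_commute_single'.2 hU
  obtain ⟨b, hb⟩ := mem_range_scalar_iff_commute_single'.2 fun i j => (hU i j).units_inv_right
  have hab : a * b = 1 := by
    apply (scalar_inj (n := Fin n)).1
    rw [map_mul, ha, hb, map_one, Units.mul_inv]
  have hba : b * a = 1 := by
    apply (scalar_inj (n := Fin n)).1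
    rw [map_mul, ha, hb, map_one, Units.inv_mul]
  exact ⟨⟨a, b, hab, hba⟩, ha.symm, hb.symm⟩

open Matrix in
/-- If conjugation by a unit of `Matₙ(R)` turns one entrywise map into another, both coming from
maps of `R` that fix `0` and `1`, then these maps of `R` differ by conjugation by a unit of `R`. -/
theorem descend_conj {R : Type u} [Ring R] {n : ℕ} [NeZero n] (γ γ' : R → R)
    (h0 : γ 0 = 0) (h1 : γ 1 = 1) (h0' : γ' 0 = 0) (h1' : γ' 1 = 1)
    (U : (Matrix (Fin n) (Fin n) R)ˣ)
    (h : ∀ A : Matrix (Fin n) (Fin n) R, A.map γ' = U.val * A.map γ * U⁻¹.val) :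
    ∃ u : Rˣ, ∀ r, γ' r = u.val * γ r * u⁻¹.val := by
  -- both entrywise maps fix the matrix units, so `U` commutes with them
  obtain ⟨u, hu, hu'⟩ := exists_scalar_unit U fun i j => by
    have hs := h (single i j 1)
    have e : ∀ δ : R → R, δ 0 = 0 → δ 1 = 1 →
        (single i j (1 : R)).map δ = single i j 1 := by
      intro δ hδ0 hδ1
      ext k l
      simp [single_apply, apply_ite δ, hδ0, hδ1]
    rw [e γ' h0' h1', e γ h0 h1] at hs
    have := congrArg (fun X => X * U.val) hs
    simpa [mul_assoc, Commute, SemiconjBy] using this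
  refine ⟨u, fun r => ?_⟩
  have := congrFun (congrFun (h (single 0 0 r)) 0) 0
  rw [hu, hu', conj_scalar_apply] at this
  simpa using this

/-! ### Entrywise maps and `Tn` -/

theorem bijective_map_iff {R : Type u} [Ring R] {n : ℕ} [NeZero n] (γ : R → R) :
    Function.Bijective (fun A : Matrix (Fin n) (Fin n) R => A.map γ) ↔ Function.Bijective γ := by
  constructor
  · rintro ⟨hi, hs⟩
    constructor
    · intro a b hab
      have := @hi (Matrix.of fun _ _ => a) (Matrix.of fun _ _ => b) (by ext; simp [hab])
      exact congrFun (congrFun this 0) 0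
    · intro b
      obtain ⟨A, hA⟩ := hs (Matrix.of fun _ _ => b)
      exact ⟨A 0 0, congrFun (congrFun hA 0) 0⟩
  · rintro ⟨hi, hs⟩
    constructor
    · intro A B hAB
      ext i j
      exact hi (congrFun (congrFun hAB i) j)
    · intro B
      choose g hg using hs
      exact ⟨B.map g, by ext; simp [hg]⟩

theorem bijective_Tn_iff {R : Type u} [Ring R] {n : ℕ} [NeZero n] (γ : R → R) :
    Function.Bijective (Tn (n := n) γ) ↔ Function.Bijective γ := by
  have h : Tn (n := n) γ = (fun A : Matrix (Fin n) (Fin n) R => A.map γ) ∘ Matrix.transpose := rfl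
  have ht : Function.Bijective (Matrix.transpose : Matrix (Fin n) (Fin n) R → _) :=
    Function.Involutive.bijective Matrix.transpose_transpose
  rw [h, Function.Bijective.of_comp_iff _ ht, bijective_map_iff]

theorem IsAntiEndo.map_zero {W : Type*} [Ring W] {α : W → W} (h : IsAntiEndo α) : α 0 = 0 := by
  simpa using h.1 0 0

theorem IsAntiEndo.tn {R : Type u} [Ring R] {n : ℕ} {γ : R → R} (h : IsAntiEndo γ) :
    IsAntiEndo (Tn (n := n) γ) := by
  refine ⟨fun A B => ?_, ?_, fun A B => ?_⟩
  · ext i j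
    simp [Tn, h.1]
  · ext i j
    by_cases hij : i = j
    · subst hij; simp [Tn, h.2.1]
    · simp [Tn, hij, Ne.symm hij, h.map_zero]
  · ext i j
    let g : R →+ R := AddMonoidHom.mk' γ h.1
    have : γ (∑ k, A j k * B k i) = ∑ k, γ (A j k * B k i) := map_sum g _ _
    simp only [Tn, Matrix.of_apply, Matrix.mul_apply, this, h.2.2]

theorem bijective_of_isInnerAut {W : Type*} [Ring W] {φ : W → W} (h : IsInnerAut φ) :
    Function.Bijective φ := by
  obtain ⟨u, hu⟩ := h
  refine Function.bijective_iff_has_inverse.2 ⟨fun w => u⁻¹.val * w * u.val, fun w => ?_, fun w => ?_⟩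
  · simp [hu, mul_assoc]
  · simp [hu, mul_assoc]

/-! ### Anti-endomorphisms and automorphisms up to inner automorphisms -/

open Matrix in
/-- Every orbit of anti-endomorphisms of `Matₙ(R)` contains some `T_nγ`. -/
theorem antiEndo_eq_conj {R : Type u} [Ring R] (n : ℕ) [NeZero n]
    (hR : ∀ (N : Type u) (_ : AddCommGroup N) (_ : Module Rᵐᵒᵖ N),
      ((Fin n → N) ≃ₗ[Rᵐᵒᵖ] (Fin n → R)) → Nonempty (N ≃ₗ[Rᵐᵒᵖ] R))
    (β : Matrix (Fin n) (Fin n) R → Matrix (Fin n) (Fin n) R) (hβ : IsAntiEndo β) :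
    ∃ γ : R → R, IsAntiEndo γ ∧
      ∃ Ψ : Matrix (Fin n) (Fin n) R → Matrix (Fin n) (Fin n) R,
        IsInnerAut Ψ ∧ β = Ψ ∘ Tn (n := n) γ := by
  obtain ⟨hadd, hone, hmul⟩ := id hβ
  let β' : Matrix (Fin n) (Fin n) R →+ Matrix (Fin n) (Fin n) R :=
    AddMonoidHom.mk' (fun A => β Aᵀ) fun A B => by rw [transpose_add, hadd]
  have hβ' : ∀ A, β' A = β Aᵀ := fun _ => rfl
  obtain ⟨P, γ, hγ, hP⟩ := exists_conj_map n hR β' (by rw [hβ', transpose_one, hone])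
    (by
      intro i j k l
      simp only [hβ', transpose_single, ← hmul]
      split_ifs with h
      · subst h; simp
      · rw [single_mul_single_of_ne (h := Ne.symm h), hβ.map_zero])
    (by
      intro i j r
      simp only [hβ', transpose_single, ← hmul]
      congr 1
      ext k l
      simp [single_apply])
    (by
      intro i j r
      simp only [hβ', transpose_single, ← hmul]
      congr 1
      ext k l
      simp [single_apply])
  have hT : ∀ A, β A = P.val * Tn γ A * P⁻¹.val := fun A => by
    have := hP Aᵀ
    rw [hβ', transpose_transpose] at this
    exact this
  have hz : γ 0 = 0 := by simpa using hγ 0 0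
  -- restricted to scalar matrices, `β` is conjugate to `γ`
  have hs : ∀ r, scalar (Fin n) (γ r) = P⁻¹.val * β (scalar (Fin n) r) * P.val := by
    intro r
    have : Tn γ (scalar (Fin n) r) = scalar (Fin n) (γ r) := by
      ext i j
      by_cases hij : i = j
      · simp [Tn, hij]
      · simp [Tn, hij, Ne.symm hij, hz]
    rw [hT, this]
    simp [mul_assoc]
  refine ⟨γ, ⟨hγ, ?_, fun r s => ?_⟩, fun A => P.val * A * P⁻¹.val, ⟨P, fun _ => rfl⟩, funext hT⟩
  · apply (scalar_inj (n := Fin n)).1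
    rw [hs, map_one, hone]
    simp
  · apply (scalar_inj (n := Fin n)).1
    rw [map_mul, hs, hs, hs, map_mul, hmul]
    simp [mul_assoc]

open Matrix in
/-- Every automorphism of `Matₙ(R)` is an inner automorphism composed with an entrywise one. -/
theorem ringAut_eq_conj {R : Type u} [Ring R] (n : ℕ) [NeZero n]
    (hR : ∀ (N : Type u) (_ : AddCommGroup N) (_ : Module Rᵐᵒᵖ N),
      ((Fin n → N) ≃ₗ[Rᵐᵒᵖ] (Fin n → R)) → Nonempty (N ≃ₗ[Rᵐᵒᵖ] R))
    (Φ : RingAut (Matrix (Fin n) (Fin n) R)) :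
    ∃ (φ : RingAut R) (P : (Matrix (Fin n) (Fin n) R)ˣ),
      ∀ A, Φ A = P.val * A.map φ * P⁻¹.val := by
  obtain ⟨P, γ, hγ, hP⟩ := exists_conj_map n hR (Φ : _ →+ _) (map_one Φ)
    (by
      intro i j k l
      simp only [AddMonoidHom.coe_coe, ← map_mul]
      split_ifs with h
      · subst h; simp
      · rw [single_mul_single_of_ne (h := h), map_zero])
    (by
      intro i j r
      simp only [AddMonoidHom.coe_coe, ← map_mul]
      congr 1
      ext k l
      simp [single_apply])
    (by
      intro i j r
      simp only [AddMonoidHom.coe_coe, ← map_mul]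
      congr 1
      ext k l
      simp [single_apply])
  simp only [AddMonoidHom.coe_coe] at hP
  have hz : γ 0 = 0 := by simpa using hγ 0 0
  have hs : ∀ r, scalar (Fin n) (γ r) = P⁻¹.val * Φ (scalar (Fin n) r) * P.val := by
    intro r
    have : (scalar (Fin n) r).map γ = scalar (Fin n) (γ r) := by
      simp [scalar_apply, diagonal_map hz]
    rw [hP, this]
    simp [mul_assoc]
  have hone : γ 1 = 1 := by
    apply (scalar_inj (n := Fin n)).1
    rw [hs, map_one, map_one]
    simp
  have hmul : ∀ r s, γ (r * s) = γ r * γ s := by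
    intro r s
    apply (scalar_inj (n := Fin n)).1
    rw [map_mul, hs, hs, hs, map_mul, map_mul]
    simp [mul_assoc]
  have hbij : Function.Bijective γ := by
    rw [← bijective_map_iff (n := n)]
    have hc : (Φ : Matrix (Fin n) (Fin n) R → Matrix (Fin n) (Fin n) R) =
        (fun A => P.val * A * P⁻¹.val) ∘ fun A => A.map γ := funext hP
    have hb := Φ.bijective
    rw [hc] at hb
    exact (Function.Bijective.of_comp_iff' (bijective_of_isInnerAut ⟨P, fun _ => rfl⟩) _).1 hb
  exact ⟨RingEquiv.ofBijective
    ({ toFun := γ, map_one' := hone, map_mul' := hmul, map_zero' := hz, map_add' := hγ } : R →+* R)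
    hbij, P, hP⟩

/-! ### Outer automorphism groups -/

theorem exists_eOut {R : Type u} [Ring R] (n : ℕ) [NeZero n]
    (hR : ∀ (N : Type u) (_ : AddCommGroup N) (_ : Module Rᵐᵒᵖ N),
      ((Fin n → N) ≃ₗ[Rᵐᵒᵖ] (Fin n → R)) → Nonempty (N ≃ₗ[Rᵐᵒᵖ] R)) :
    letI := innerAuts_normal R
    letI := innerAuts_normal (Matrix (Fin n) (Fin n) R)
    ∃ eOut : (RingAut R ⧸ innerAuts R) ≃*
        (RingAut (Matrix (Fin n) (Fin n) R) ⧸ innerAuts (Matrix (Fin n) (Fin n) R)),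
      ∀ φ : RingAut R,
        eOut (QuotientGroup.mk φ) =
          QuotientGroup.mk (φ.mapMatrix : RingAut (Matrix (Fin n) (Fin n) R)) := by
  let := innerAuts_normal R
  let := innerAuts_normal (Matrix (Fin n) (Fin n) R)
  let F : RingAut R →* RingAut (Matrix (Fin n) (Fin n) R) :=
    { toFun := fun φ => φ.mapMatrix
      map_one' := rfl
      map_mul' := fun _ _ => rfl }
  have hF : ∀ φ A, F φ A = A.map φ := fun _ _ => rfl
  have hmem : ∀ φ, F φ ∈ innerAuts (Matrix (Fin n) (Fin n) R) ↔ φ ∈ innerAuts R := by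
    intro φ
    constructor
    · rintro ⟨U, hU⟩
      exact descend_conj id φ rfl rfl (map_zero φ) (map_one φ) U fun A => by
        rw [Matrix.map_id, ← hU A, hF]
    · rintro ⟨u, hu⟩
      obtain ⟨U, hU⟩ := exists_conj_scalar n u
      refine ⟨U, fun A => ?_⟩
      ext i j
      rw [hU, hF, Matrix.map_apply, hu]
  let G : RingAut R ⧸ innerAuts R →*
      RingAut (Matrix (Fin n) (Fin n) R) ⧸ innerAuts (Matrix (Fin n) (Fin n) R) :=
    QuotientGroup.map _ _ F fun φ hφ => (hmem φ).2 hφ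
  have hG : Function.Bijective G := by
    constructor
    · rw [injective_iff_map_eq_one]
      intro a
      induction a using QuotientGroup.induction_on with
      | H φ =>
        intro h
        exact (QuotientGroup.eq_one_iff φ).2 ((hmem φ).1 ((QuotientGroup.eq_one_iff (F φ)).1 h))
    · intro b
      induction b using QuotientGroup.induction_on with
      | H Φ =>
        obtain ⟨φ, P, hP⟩ := ringAut_eq_conj n hR Φ
        refine ⟨QuotientGroup.mk φ, ?_⟩
        show QuotientGroup.mk (F φ) = QuotientGroup.mk Φ
        symm
        rw [← div_eq_one, ← QuotientGroup.mk_div, QuotientGroup.eq_one_iff, div_eq_mul_inv]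
        refine ⟨P, fun A => ?_⟩
        show Φ ((F φ)⁻¹ A) = _
        rw [hP, ← hF]
        have : F φ ((F φ)⁻¹ A) = A := (F φ).apply_symm_apply A
        rw [this]
  exact ⟨MulEquiv.ofBijective G hG, fun _ => rfl⟩

/-- If `Nⁿ ≅ Rⁿ` forces `N ≅ R`, then `γ ↦ T_nγ` induces a bijection
between orbits of anti-endomorphisms of `R` and of `Matₙ(R)` under composition with inner
automorphisms, restricting to anti-automorphism orbits; in particular `R` has an
anti-automorphism iff `Matₙ(R)` does, and in that case `Out(R) ≅ Out(Matₙ(R))` via the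
entrywise map. -/
theorem stmt_18 {R : Type u} [Ring R] (n : ℕ) (hn : 1 ≤ n)
    (hR : ∀ (N : Type u) (_ : AddCommGroup N) (_ : Module Rᵐᵒᵖ N),
      ((Fin n → N) ≃ₗ[Rᵐᵒᵖ] (Fin n → R)) → Nonempty (N ≃ₗ[Rᵐᵒᵖ] R)) :
    -- `T_n` sends anti-endomorphisms to anti-endomorphisms, anti-automorphisms to
    -- anti-automorphisms
    (∀ γ : R → R, IsAntiEndo γ → IsAntiEndo (Tn (n := n) γ) ∧
      (Function.Bijective γ ↔ Function.Bijective (Tn (n := n) γ))) ∧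
    -- well-definedness and injectivity of the induced orbit map
    (∀ γ γ' : R → R, IsAntiEndo γ → IsAntiEndo γ' →
      ((∃ ψ : R → R, IsInnerAut ψ ∧ γ' = ψ ∘ γ) ↔
        (∃ Ψ : Matrix (Fin n) (Fin n) R → Matrix (Fin n) (Fin n) R,
          IsInnerAut Ψ ∧ Tn (n := n) γ' = Ψ ∘ Tn (n := n) γ))) ∧
    -- surjectivity of the orbit map
    (∀ β : Matrix (Fin n) (Fin n) R → Matrix (Fin n) (Fin n) R, IsAntiEndo β →
      ∃ γ : R → R, IsAntiEndo γ ∧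
        ∃ Ψ : Matrix (Fin n) (Fin n) R → Matrix (Fin n) (Fin n) R,
          IsInnerAut Ψ ∧ β = Ψ ∘ Tn (n := n) γ) ∧
    -- `R` admits an anti-automorphism iff `Matₙ(R)` does
    ((∃ γ : R → R, IsAntiAuto γ) ↔
      (∃ β : Matrix (Fin n) (Fin n) R → Matrix (Fin n) (Fin n) R, IsAntiAuto β)) ∧
    -- `Out(R) ≅ Out(Matₙ(R))` via the entrywise map
    ((∃ γ : R → R, IsAntiAuto γ) →
      letI := innerAuts_normal R
      letI := innerAuts_normal (Matrix (Fin n) (Fin n) R)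
      ∃ eOut : (RingAut R ⧸ innerAuts R) ≃*
          (RingAut (Matrix (Fin n) (Fin n) R) ⧸ innerAuts (Matrix (Fin n) (Fin n) R)),
        ∀ φ : RingAut R,
          eOut (QuotientGroup.mk φ) =
            QuotientGroup.mk (φ.mapMatrix : RingAut (Matrix (Fin n) (Fin n) R))) := by
  have : NeZero n := ⟨by omega⟩
  refine ⟨fun γ hγ => ⟨hγ.tn, (bijective_Tn_iff γ).symm⟩, ?_, antiEndo_eq_conj n hR, ?_,
    fun _ => exists_eOut n hR⟩
  · intro γ γ' hγ hγ'
    constructor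
    · rintro ⟨ψ, ⟨u, hu⟩, rfl⟩
      obtain ⟨U, hU⟩ := exists_conj_scalar n u
      refine ⟨fun A => U.val * A * U⁻¹.val, ⟨U, fun _ => rfl⟩, ?_⟩
      funext A
      ext i j
      exact (hu _).trans (hU (Tn γ A) i j).symm
    · rintro ⟨Ψ, ⟨U, hU⟩, h⟩
      obtain ⟨u, hu⟩ := descend_conj γ γ' hγ.map_zero hγ.2.1 hγ'.map_zero hγ'.2.1 U fun A =>
        (congrFun h A.transpose).trans (hU _)
      exact ⟨fun r => u.val * r * u⁻¹.val, ⟨u, fun _ => rfl⟩, funext hu⟩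
  · constructor
    · rintro ⟨γ, hγ, hb⟩
      exact ⟨Tn γ, hγ.tn, (bijective_Tn_iff γ).2 hb⟩
    · rintro ⟨β, hβ, hb⟩
      obtain ⟨γ, hγ, Ψ, hΨ, rfl⟩ := antiEndo_eq_conj n hR β hβ
      exact ⟨γ, hγ, (bijective_Tn_iff γ).1
        ((Function.Bijective.of_comp_iff' (bijective_of_isInnerAut hΨ) _).1 hb)⟩
end

section
/- Let W be a nonzero semisimple (artinian) ring with an involution * such that the only idempotents e ∈ W satisfying e* = e are 0 and 1. Then one of the following holds: (1) W is a division ring; (2) there exist a division ring D and a ring isomorphism φ : W → D × Dᵒᵖ under which the involution exchanges the two factors, i.e., the involution induced on D × Dᵒᵖ via φ maps D × {0} onto {0} × Dᵒᵖ and {0} × Dᵒᵖ onto D × {0}; (3) there exist a field F and a ring isomorphism φ : W → Mat₂(F) carrying * to the symplectic involution, i.e., φ(w*) = tr(φ(w))·1 − φ(w) for all w ∈ W. -/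
universe u

/-!
Call an idempotent `e` primitive when `W e` is a minimal left ideal and `e W` a minimal right
ideal. A semisimple ring is von Neumann regular, so a generator `e` of any minimal left ideal is
primitive, and `e*` is primitive as well.

Suppose `u = u e` and `z = u* u ≠ 0`. By primitivity `z ∈ e* W e` has an inverse `y ∈ e W e*`,
which is symmetric because `z` is. Then `u y u*` is a nonzero symmetric idempotent, hence `1`;
so `u` has a right inverse and `W` is a division ring.

If `W` is not a division ring, it follows that `u* u = 0` for all `u ∈ W e`. In particular
`e* e = 0`, and likewise `e e* = 0`, so `e + e*` is a symmetric idempotent and equals `1`.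
Polarizing `u* u = 0` shows that every element of `e* W e` is skew.

* If `e* W e = 0`, then `e` is central and `W = e W e × e* W e*`, with `*` exchanging the factors.
* Otherwise some nonzero `x ∈ e* W e` has an inverse `y ∈ e W e*`, and `e, y, x, e*` are matrix
  units, giving `W ≃ Mat₂(e W e)`. As `x c` is skew for `c ∈ e W e`, one gets `c* = x c y`, so
  `c ↦ x c y` is both multiplicative and antimultiplicative, which makes `e W e` commutative.
  Computing entries, using `x* = -x` and `y* = -y`, identifies `*` with the symplectic involution.
-/

/-! ### Primitive idempotents in semisimple rings -/

/-- An idempotent `e` generating a minimal left ideal `W e` and a minimal right ideal `e W`.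
Minimality is expressed by saying that each nonzero element of the ideal generates `e`. -/
structure IsPrim {W : Type u} [Ring W] (e : W) : Prop where
  idem : e * e = e
  ne : e ≠ 0
  left : ∀ x, x ≠ 0 → x * e = x → ∃ v, v * x = e
  right : ∀ x, x ≠ 0 → e * x = x → ∃ v, x * v = e

theorem mul_mul_of_mul {W : Type u} [Ring W] {a b c : W} (h : a * b = c) (t : W) :
    a * (b * t) = c * t := by rw [← mul_assoc, h]

/-- Semisimple rings are von Neumann regular. -/
theorem exists_mul_mul_self {W : Type u} [Ring W] [IsSemisimpleRing W] (x : W) :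
    ∃ r, x * r * x = x := by
  obtain ⟨e, he, hs⟩ := IsSemisimpleRing.ideal_eq_span_idempotent (Ideal.span {x})
  have h1 : x ∈ Ideal.span {e} := hs ▸ Ideal.mem_span_singleton_self x
  have h2 : e ∈ Ideal.span {x} := hs.symm ▸ Ideal.mem_span_singleton_self e
  obtain ⟨a, ha⟩ := Ideal.mem_span_singleton'.1 h1
  obtain ⟨r, hr⟩ := Ideal.mem_span_singleton'.1 h2
  refine ⟨r, ?_⟩
  rw [mul_assoc, hr, ← ha, mul_assoc, he.eq]

theorem exists_isPrim (W : Type u) [Ring W] [Nontrivial W] [IsSemisimpleRing W] :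
    ∃ e : W, IsPrim e := by
  obtain ⟨m, hm⟩ := IsSemisimpleModule.exists_simple_submodule W W
  obtain ⟨e, he, hs⟩ := IsSemisimpleRing.ideal_eq_span_idempotent m
  have hat : IsAtom m := isSimpleModule_iff_isAtom.1 hm
  have hem : e ∈ m := hs ▸ Ideal.mem_span_singleton_self e
  have hL : ∀ x, x ≠ 0 → x * e = x → ∃ v, v * x = e := by
    intro x hx hxe
    have hxm : x ∈ m := by rw [← hxe]; exact m.smul_mem x hem
    have hle : Ideal.span {x} ≤ m := (Ideal.span_singleton_le_iff_mem _).2 hxm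
    have heq : Ideal.span {x} = m :=
      (hat.le_iff.1 hle).resolve_left fun h ↦ hx (Ideal.span_singleton_eq_bot.1 h)
    exact Ideal.mem_span_singleton'.1 (heq ▸ hem)
  refine ⟨e, he.eq, ?_, hL, ?_⟩
  · rintro rfl
    exact hat.1 (by rw [hs]; simp)
  · intro x hx hex
    obtain ⟨r, hr⟩ := exists_mul_mul_self x
    -- `g = x r e` is a nonzero idempotent of the division ring `e W e`, so it is `e`.
    have hg : (x * r * e) * (x * r * e) = x * r * e := by
      calc (x * r * e) * (x * r * e) = x * r * (e * x) * r * e := by simp only [mul_assoc]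
        _ = x * r * e := by rw [hex, hr]
    have hg0 : x * r * e ≠ 0 := by
      intro h
      apply hx
      calc x = x * r * e * x := by rw [mul_assoc _ e, hex, hr]
        _ = 0 := by rw [h, zero_mul]
    obtain ⟨s, hs⟩ := hL (x * r * e) hg0 (by rw [mul_assoc, he.eq])
    refine ⟨r * e, ?_⟩
    calc x * (r * e) = (e * x) * r * e := by rw [hex, mul_assoc]
      _ = e * (x * r * e) := by simp only [mul_assoc]
      _ = s * (x * r * e) * (x * r * e) := by rw [hs]
      _ = e := by rw [mul_assoc, hg, hs]

/-- A nonzero element of `f W e`, with `e` and `f` primitive, has an inverse in `e W f`. -/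
theorem IsPrim.exists_inv {W : Type u} [Ring W] {e f z : W} (he : IsPrim e) (hf : IsPrim f)
    (hz : z ≠ 0) (hze : z * e = z) (hfz : f * z = z) :
    ∃ y, e * y = y ∧ y * f = y ∧ y * z = e ∧ z * y = f := by
  obtain ⟨v, hv⟩ := he.left z hz hze
  obtain ⟨w, hw⟩ := hf.right z hz hfz
  have h1 : e * v * f * z = e := by rw [mul_assoc _ f, hfz, mul_assoc, hv, he.idem]
  have h2 : z * (e * w * f) = f := by
    rw [← mul_assoc, ← mul_assoc, hze, hw, hf.idem]
  have h3 : e * v * f = e * w * f := by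
    calc e * v * f = e * v * f * (z * (e * w * f)) := by rw [h2, mul_assoc _ f, hf.idem]
      _ = e * w * f := by rw [← mul_assoc, h1, ← mul_assoc, ← mul_assoc, he.idem]
  refine ⟨e * v * f, ?_, ?_, h1, h3 ▸ h2⟩
  · rw [← mul_assoc, ← mul_assoc, he.idem]
  · rw [mul_assoc, hf.idem]

theorem IsPrim.star {W : Type u} [Ring W] {star : W → W} (h0 : star 0 = 0)
    (hmul : ∀ u v : W, star (u * v) = star v * star u)
    (hinvol : ∀ w : W, star (star w) = w) {e : W} (he : IsPrim e) : IsPrim (star e) := by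
  have hne : ∀ x, x ≠ 0 → star x ≠ 0 := fun x hx h ↦ hx (by rw [← hinvol x, h, h0])
  refine ⟨by rw [← hmul, he.idem], hne _ he.ne, ?_, ?_⟩
  · intro x hx hxe
    obtain ⟨v, hv⟩ := he.right (star x) (hne x hx) (by rw [← hinvol e, ← hmul, hxe])
    exact ⟨star v, by rw [← hv, hmul, hinvol]⟩
  · intro x hx hxe
    obtain ⟨v, hv⟩ := he.left (star x) (hne x hx) (by rw [← hinvol e, ← hmul, hxe])
    exact ⟨star v, by rw [← hv, hmul, hinvol]⟩

/-! ### Anisotropic elements of minimal left ideals -/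

/-- An anisotropic vector `u` in a minimal left ideal `W e` forces `W` to be a division ring:
it yields a nonzero symmetric idempotent `u y u*`. -/
theorem isUnit_of_star_mul_ne_zero {W : Type u} [Ring W] {star : W → W} (h0 : star 0 = 0)
    (hmul : ∀ u v : W, star (u * v) = star v * star u)
    (hinvol : ∀ w : W, star (star w) = w)
    (hidem : ∀ e : W, e * e = e → star e = e → e = 0 ∨ e = 1)
    {e u : W} (he : IsPrim e) (hue : u * e = u) (hu : star u * u ≠ 0) :
    ∀ w : W, w ≠ 0 → IsUnit w := by
  have he' := he.star h0 hmul hinvol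
  have hzs : star (star u * u) = star u * u := by rw [hmul, hinvol]
  obtain ⟨y, hy1, hy2, hy3, hy4⟩ := he.exists_inv he' hu (by rw [mul_assoc, hue])
    (by rw [← mul_assoc, ← hmul, hue])
  have hys : star y = y := by
    have h1 : (star u * u) * star y = star e := by rw [← hy3, hmul, hzs]
    have h2 : e * star y = star y := by
      rw [← hinvol e, ← hmul, hy2]
    calc star y = y * (star u * u) * star y := by rw [hy3, h2]
      _ = y := by rw [mul_assoc, h1, hy2]
  have hf : u * y * star u = 1 := by
    refine (hidem (u * y * star u) ?_ ?_).resolve_left ?_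
    · calc u * y * star u * (u * y * star u) = u * (y * (star u * u)) * y * star u := by
            simp only [mul_assoc]
        _ = u * y * star u := by rw [hy3, hue]
    · rw [hmul, hmul, hinvol, hys, mul_assoc]
    · intro h
      apply hu
      calc star u * u = star u * u * (y * (star u * u)) := by rw [hy3, mul_assoc, hue]
        _ = star u * (u * y * star u) * u := by simp only [mul_assoc]
        _ = 0 := by rw [h, mul_zero, zero_mul]
  have hey : e * (y * star u) = y * star u := by rw [← mul_assoc, hy1]
  have hleft : ∀ x : W, x ≠ 0 → ∃ s, s * x = 1 := by
    intro x hx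
    have hxu : x * u ≠ 0 := by
      intro h
      apply hx
      rw [← mul_one x, ← hf, ← mul_assoc, ← mul_assoc, h, zero_mul, zero_mul]
    obtain ⟨s, hs⟩ := he.left (x * u) hxu (by rw [mul_assoc, hue])
    refine ⟨u * s, ?_⟩
    calc u * s * x = u * s * x * (u * y * star u) := by rw [hf, mul_one]
      _ = u * (s * (x * u)) * (y * star u) := by simp only [mul_assoc]
      _ = 1 := by rw [hs, hue, ← mul_assoc, hf]
  intro w hw
  obtain ⟨s, hs⟩ := hleft w hw
  have hs0 : s ≠ 0 := by
    rintro rfl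
    rw [zero_mul] at hs
    exact hw (by rw [← one_mul w, ← hs, zero_mul])
  obtain ⟨t, ht⟩ := hleft s hs0
  have htw : t = w := by rw [← mul_one t, ← hs, ← mul_assoc, ht, one_mul]
  exact ⟨⟨w, s, htw ▸ ht, hs⟩, rfl⟩

/-! ### Corner rings -/

/-- The compression `e w e` as an element of the corner ring `e W e`. -/
def compress {W : Type u} [Ring W] {e : W} (he : IsIdempotentElem e) (w : W) : he.Corner :=
  ⟨e * w * e, w, rfl⟩

theorem compress_eq {W : Type u} [Ring W] {e : W} (he : IsIdempotentElem e) {a b : W}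
    (h : e * a * e = e * b * e) : compress he a = compress he b := Subtype.ext h

theorem compress_add {W : Type u} [Ring W] {e : W} (he : IsIdempotentElem e) (a b : W) :
    compress he (a + b) = compress he a + compress he b :=
  Subtype.ext (show e * (a + b) * e = e * a * e + e * b * e by rw [mul_add, add_mul])

theorem compress_neg {W : Type u} [Ring W] {e : W} (he : IsIdempotentElem e) (a : W) :
    compress he (-a) = -compress he a :=
  Subtype.ext (show e * (-a) * e = -(e * a * e) by simp)

theorem compress_mul {W : Type u} [Ring W] {e : W} (he : IsIdempotentElem e) (a b : W) :
    compress he a * compress he b = compress he (a * e * b) :=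
  Subtype.ext (show e * a * e * (e * b * e) = e * (a * e * b) * e by
    rw [← mul_assoc, ← mul_assoc, mul_assoc (e * a) e e, he.eq]
    simp only [mul_assoc])

theorem compress_val {W : Type u} [Ring W] {e : W} (he : IsIdempotentElem e) (d : he.Corner) :
    compress he d.1 = d := by
  obtain ⟨h1, h2⟩ := (Subsemigroup.mem_corner_iff he).1 d.2
  exact Subtype.ext (show e * d.1 * e = d.1 by rw [h1, h2])

/-- The corner of a primitive idempotent has inverses. -/
theorem IsPrim.isUnit_or_eq_zero {W : Type u} [Ring W] {e : W} (he : IsPrim e)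
    (hi : IsIdempotentElem e) (d : hi.Corner) : IsUnit d ∨ d = 0 := by
  obtain ⟨h1, h2⟩ := (Subsemigroup.mem_corner_iff hi).1 d.2
  by_cases hd : d.1 = 0
  · exact Or.inr (Subtype.ext hd)
  · left
    obtain ⟨y, hy1, hy2, hy3, hy4⟩ := he.exists_inv he hd h2 h1
    exact ⟨⟨d, ⟨y, (Subsemigroup.mem_corner_iff hi).2 ⟨hy1, hy2⟩⟩, Subtype.ext hy4,
      Subtype.ext hy3⟩, rfl⟩

theorem IsPrim.nontrivial_corner {W : Type u} [Ring W] {e : W} (he : IsPrim e)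
    (hi : IsIdempotentElem e) : Nontrivial hi.Corner :=
  ⟨1, 0, fun h ↦ he.ne (congrArg Subtype.val h)⟩

/-! ### The exchange involution -/

/-- If `e + e* = 1` and `e* W e = 0`, then `W` is `e W e × (e W e)ᵒᵖ` with the exchange
involution: the second coordinate of `w` is the first coordinate of `w*`. -/
theorem exists_equiv_prod {W : Type u} [Ring W] {star : W → W}
    (hadd : ∀ u v : W, star (u + v) = star u + star v)
    (hmul : ∀ u v : W, star (u * v) = star v * star u)
    (hinvol : ∀ w : W, star (star w) = w)
    {e : W} (he : IsPrim e) (h1 : e + star e = 1) (h21 : ∀ w, star e * w * e = 0) :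
    ∃ (D : Type u) (instD : DivisionRing D),
      letI := instD
      ∃ φ : W ≃+* D × Dᵐᵒᵖ,
        (∀ d : D, (φ (star (φ.symm (d, 0)))).1 = 0) ∧
        (∀ d : Dᵐᵒᵖ, (φ (star (φ.symm (0, d)))).2 = 0) := by
  have hi : IsIdempotentElem e := he.idem
  have h12 : ∀ w, e * w * star e = 0 := by
    intro w
    by_contra h
    obtain ⟨v, hv⟩ := he.right _ h (by rw [← mul_assoc, ← mul_assoc, he.idem])
    apply he.ne
    rw [← he.idem]
    nth_rw 1 [← hv]
    rw [mul_assoc, mul_assoc, ← mul_assoc (star e), h21, mul_zero]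
  have hc : ∀ w, e * w = w * e := by
    intro w
    calc e * w = e * w * (e + star e) := by rw [h1, mul_one]
      _ = (e + star e) * w * e := by rw [mul_add, h12, add_mul, add_mul, h21]
      _ = w * e := by rw [h1, one_mul]
  have hse : e * star e = 0 := by simpa using h12 1
  have hes : star e * e = 0 := by simpa using h21 1
  have hD := he.nontrivial_corner hi
  refine ⟨hi.Corner, DivisionRing.ofIsUnitOrEqZero (he.isUnit_or_eq_zero hi), ?_⟩
  let φ : W ≃+* hi.Corner × (hi.Corner)ᵐᵒᵖ :=
    { toFun := fun w ↦ (compress hi w, MulOpposite.op (compress hi (star w)))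
      invFun := fun p ↦ p.1.1 + star p.2.unop.1
      left_inv := by
        intro w
        change e * w * e + star (e * star w * e) = w
        rw [hmul, hmul, hinvol, hc w, mul_assoc w, he.idem, ← mul_assoc]
        have h3 : star e * w * star e = w * star e := by
          have := h12 w
          calc star e * w * star e = (e + star e) * w * star e := by
                rw [add_mul, add_mul, h12, zero_add]
            _ = _ := by rw [h1, one_mul]
        rw [h3, ← mul_add, h1, mul_one]
      right_inv := by
        rintro ⟨a, b⟩
        have key : ∀ d : hi.Corner, compress hi (star d.1) = 0 := by
          intro d
          obtain ⟨g1, g2⟩ := (Subsemigroup.mem_corner_iff hi).1 d.2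
          refine Subtype.ext (show e * star d.1 * e = 0 from ?_)
          rw [← g1, hmul, mul_assoc, mul_assoc, hes, mul_zero, mul_zero]
        refine Prod.ext ?_ (MulOpposite.unop_injective ?_)
        · change compress hi (a.1 + star b.unop.1) = a
          rw [compress_add, key, add_zero, compress_val]
        · change compress hi (star (a.1 + star b.unop.1)) = b.unop
          rw [hadd, hinvol, compress_add, key, zero_add, compress_val]
      map_mul' := by
        have key : ∀ u v, compress hi (u * v) = compress hi u * compress hi v := by
          intro u v
          rw [compress_mul]
          refine compress_eq hi ?_
          rw [← hc u, mul_assoc e u v, ← mul_assoc e e, he.idem]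
        intro u v
        refine Prod.ext (key u v) (MulOpposite.unop_injective ?_)
        change compress hi (star (u * v)) = compress hi (star v) * compress hi (star u)
        rw [hmul, key]
      map_add' := by
        intro u v
        refine Prod.ext (compress_add hi u v) (MulOpposite.unop_injective ?_)
        change compress hi (star (u + v)) = compress hi (star u) + compress hi (star v)
        rw [hadd, compress_add] }
  have hswap1 : ∀ w, (φ (star w)).1 = (φ w).2.unop := fun w ↦ rfl
  have hswap2 : ∀ w, (φ (star w)).2.unop = (φ w).1 := fun w ↦ by
    change compress hi (star (star w)) = compress hi w
    rw [hinvol]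
  refine ⟨φ, fun d ↦ ?_, fun d ↦ MulOpposite.unop_injective ?_⟩
  · refine (hswap1 _).trans ?_
    rw [RingEquiv.apply_symm_apply]; rfl
  · refine (hswap2 _).trans ?_
    rw [RingEquiv.apply_symm_apply]; rfl

/-! ### The symplectic involution -/

/-- If `e + e* = 1`, every element of `e* W e` is skew and `e* W e ≠ 0`, then `W` is a `2 × 2`
matrix ring over the field `e W e` with the symplectic involution. -/
theorem exists_equiv_matrix {W : Type u} [Ring W] {star : W → W} (h0 : star 0 = 0)
    (hmul : ∀ u v : W, star (u * v) = star v * star u)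
    (hinvol : ∀ w : W, star (star w) = w)
    {e : W} (he : IsPrim e) (h1 : e + star e = 1)
    (hskew : ∀ w, star (star e * w * e) = -(star e * w * e))
    {w₀ : W} (hw₀ : star e * w₀ * e ≠ 0) :
    ∃ (F : Type u) (instF : Field F),
      letI := instF
      ∃ φ : W ≃+* Matrix (Fin 2) (Fin 2) F,
        ∀ w : W,
          φ (star w) =
            (Matrix.trace (φ w)) • (1 : Matrix (Fin 2) (Fin 2) F) - φ w := by
  have hi : IsIdempotentElem e := he.idem
  have he' := he.star h0 hmul hinvol
  have hes : star e * e = 0 := by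
    have h := congrArg (· * e) h1
    simpa [add_mul, he.idem] using h
  have hse : e * star e = 0 := by
    have h := congrArg (e * ·) h1
    simpa [mul_add, he.idem] using h
  obtain ⟨x, hx0, hxe, hex, hxs⟩ : ∃ x, x ≠ 0 ∧ x * e = x ∧ star e * x = x ∧ star x = -x :=
    ⟨_, hw₀, by rw [mul_assoc, he.idem], by rw [← mul_assoc, ← mul_assoc, he'.idem], hskew _⟩
  obtain ⟨y, hey, hye, hyx, hxy⟩ := he.exists_inv he' hx0 hxe hex
  have hys : star y = -y := by
    have h2 : star y * x = -e := by
      have := congrArg star hxy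
      rw [hmul, hxs, hinvol, mul_neg] at this
      rw [← this, neg_neg]
    calc star y = star y * star e := by rw [← hmul, hey]
      _ = -y := by rw [← hxy, ← mul_assoc, h2, neg_mul, hey]
  -- `x w e` lies in `e* W e`, so it is skew; this computes `*` on `e W e`.
  have hS : ∀ w, star (e * w * e) = x * w * y := by
    intro w
    have h2 := hskew (x * w)
    have h3 : star e * (x * w) * e = x * (e * w * e) := by
      rw [← mul_assoc (star e), hex, ← mul_assoc, ← mul_assoc, hxe]
    rw [h3, hmul, hxs, mul_neg, neg_inj] at h2
    calc star (e * w * e) = star (e * w * e) * star e := by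
          rw [← hmul, ← mul_assoc, ← mul_assoc, he.idem]
      _ = x * (e * w * e) * y := by rw [← hxy, ← mul_assoc, h2]
      _ = x * w * y := by rw [mul_assoc x, mul_assoc _ e y, hey, mul_assoc e, ← mul_assoc x, hxe,
                            ← mul_assoc]
  have hT : ∀ w, e * star w * e = y * w * x := by
    intro w
    have h2 := congrArg star (hS (star w))
    rwa [hinvol, hmul, hmul, hinvol, hxs, hys, neg_mul, mul_neg, mul_neg, neg_neg,
      ← mul_assoc] at h2
  -- `c ↦ c* = x c y` is both multiplicative and antimultiplicative on `e W e`.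
  have hcomm : ∀ c d : hi.Corner, c * d = d * c := by
    intro c d
    obtain ⟨c1, c2⟩ := (Subsemigroup.mem_corner_iff hi).1 c.2
    obtain ⟨d1, d2⟩ := (Subsemigroup.mem_corner_iff hi).1 d.2
    have hS' : ∀ a, e * a = a → a * e = a → star a = x * a * y := fun a h h' ↦ by
      rw [← hS, h, h']
    have h2 : x * (c.1 * d.1) * y = x * (d.1 * c.1) * y := by
      rw [← hS' (c.1 * d.1) (by rw [← mul_assoc, c1]) (by rw [mul_assoc, d2]), hmul,
        hS' _ c1 c2, hS' _ d1 d2]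
      calc x * d.1 * y * (x * c.1 * y) = x * d.1 * (y * x) * c.1 * y := by
            simp only [mul_assoc]
        _ = x * (d.1 * c.1) * y := by rw [hyx, mul_assoc x, d2, mul_assoc x]
    have h3 : ∀ a, e * a * e = y * (x * a * y) * x := fun a ↦ by
      rw [← mul_assoc, ← mul_assoc, hyx, mul_assoc _ y, hyx]
    refine Subtype.ext (show c.1 * d.1 = d.1 * c.1 from ?_)
    calc c.1 * d.1 = e * (c.1 * d.1) * e := by rw [← mul_assoc, c1, mul_assoc, d2]
      _ = e * (d.1 * c.1) * e := by rw [h3, h2, ← h3]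
      _ = d.1 * c.1 := by rw [← mul_assoc, d1, mul_assoc, c2]
  have hD := he.nontrivial_corner hi
  let instC : CommRing hi.Corner := { (inferInstance : Ring hi.Corner) with mul_comm := hcomm }
  refine ⟨hi.Corner, Field.ofIsUnitOrEqZero (he.isUnit_or_eq_zero hi), ?_⟩
  have hye0 : y * e = 0 := by rw [← hye, mul_assoc, hes, mul_zero]
  have hex0 : e * x = 0 := by rw [← hex, ← mul_assoc, hse, zero_mul]
  have hprod : ∀ a b, compress hi a * compress hi b + compress hi (a * x) * compress hi (y * b)
      = compress hi (a * b) := by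
    intro a b
    rw [compress_mul, compress_mul, ← compress_add]
    refine congrArg _ ?_
    calc a * e * b + a * x * e * (y * b) = a * (e + (x * e) * y) * b := by
          rw [mul_add, add_mul]; simp only [mul_assoc]
      _ = a * b := by rw [hxe, hxy, h1, mul_one]
  let φ : W ≃+* Matrix (Fin 2) (Fin 2) hi.Corner :=
    { toFun := fun w ↦ !![compress hi w, compress hi (w * x);
        compress hi (y * w), compress hi (y * w * x)]
      invFun := fun M ↦ (M 0 0).1 + (M 0 1).1 * y + x * (M 1 0).1 + x * (M 1 1).1 * y
      left_inv := by
        intro w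
        change e * w * e + e * (w * x) * e * y + x * (e * (y * w) * e)
          + x * (e * (y * w * x) * e) * y = w
        have r2 := mul_mul_of_mul hey
        have r3 := mul_mul_of_mul hxy
        calc _ = e * w * e + e * w * star e + star e * w * e + star e * w * star e := by
              simp only [mul_assoc, r2, r3, hey, hxy]
          _ = (e + star e) * w * (e + star e) := by
              simp only [mul_add, add_mul]; abel
          _ = w := by rw [h1, one_mul, mul_one]
      right_inv := by
        intro M
        have hl : ∀ d : hi.Corner, e * d.1 = d.1 := fun d ↦
          ((Subsemigroup.mem_corner_iff hi).1 d.2).1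
        have hr : ∀ d : hi.Corner, d.1 * e = d.1 := fun d ↦
          ((Subsemigroup.mem_corner_iff hi).1 d.2).2
        have hdx : ∀ d : hi.Corner, d.1 * x = 0 := fun d ↦ by
          rw [← hr d, mul_assoc, hex0, mul_zero]
        have hyd : ∀ d : hi.Corner, y * d.1 = 0 := fun d ↦ by
          rw [← hl d, ← mul_assoc, hye0, zero_mul]
        have r1 := mul_mul_of_mul hex0
        have r2 := mul_mul_of_mul hyx
        have r3 := fun d ↦ mul_mul_of_mul (hyd d)
        have r4 := fun d ↦ mul_mul_of_mul (hl d)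
        ext i j
        refine Subtype.ext ?_
        fin_cases i <;> fin_cases j
        · change e * ((M 0 0).1 + (M 0 1).1 * y + x * (M 1 0).1 + x * (M 1 1).1 * y) * e
            = (M 0 0).1
          simp [mul_add, add_mul, mul_assoc, hl, hr, hye0, r1]
        · change e * (((M 0 0).1 + (M 0 1).1 * y + x * (M 1 0).1 + x * (M 1 1).1 * y) * x) * e
            = (M 0 1).1
          simp [mul_add, add_mul, mul_assoc, hl, hr, r1, hdx, hyx]
        · change e * (y * ((M 0 0).1 + (M 0 1).1 * y + x * (M 1 0).1 + x * (M 1 1).1 * y)) * e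
            = (M 1 0).1
          simp [mul_add, add_mul, mul_assoc, hl, hr, hye0, r2, r3, hyd]
        · change e * (y * ((M 0 0).1 + (M 0 1).1 * y + x * (M 1 0).1 + x * (M 1 1).1 * y) * x) * e
            = (M 1 1).1
          simp [mul_add, add_mul, mul_assoc, hl, hr, hyx, r2, r3, hdx]
      map_mul' := by
        intro u v
        have q1 := hprod u v
        have q2 := hprod u (v * x)
        have q3 := hprod (y * u) v
        have q4 := hprod (y * u) (v * x)
        rw [← mul_assoc y v x, ← mul_assoc] at q2 q4
        rw [mul_assoc y u v] at q3 q4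
        rw [Matrix.mul_fin_two, q1, q2, q3, q4]
      map_add' := by
        intro u v
        ext i j
        fin_cases i <;> fin_cases j <;> simp [mul_add, add_mul, compress_add] }
  refine ⟨φ, fun w ↦ ?_⟩
  have e11 : compress hi (star w) = compress hi (y * w * x) := by
    refine compress_eq hi ?_
    rw [hT, mul_assoc e, mul_assoc _ x, hxe, ← mul_assoc, ← mul_assoc, hey]
  have e22 : compress hi (y * star w * x) = compress hi w := by
    refine compress_eq hi ?_
    rw [← hT, hinvol, mul_assoc e (e * w * e), mul_assoc (e * w) e e, he.idem, ← mul_assoc,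
      ← mul_assoc, he.idem]
  have e12 : compress hi (star w * x) = -compress hi (w * x) := by
    rw [← compress_neg]
    refine compress_eq hi ?_
    have h2 := hT (x * star w)
    rw [hmul, hinvol, hxs, ← mul_assoc y x, hyx] at h2
    rw [← mul_neg, h2, mul_assoc e, mul_assoc _ x, hxe, mul_assoc]
  have e21 : compress hi (y * star w) = -compress hi (y * w) := by
    rw [← compress_neg]
    refine compress_eq hi ?_
    have h2 := hT (star w * y)
    rw [hmul, hinvol, hys, mul_assoc y, mul_assoc (star w), hyx] at h2
    rw [← neg_mul, h2, ← mul_assoc, hey, mul_assoc]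
  have hφ : ∀ v, φ v = !![compress hi v, compress hi (v * x);
        compress hi (y * v), compress hi (y * v * x)] := fun v ↦ rfl
  rw [hφ, hφ, e11, e22, e12, e21]
  ext i j
  fin_cases i <;> fin_cases j <;> simp [Matrix.trace_fin_two]

/-! ### The trichotomy -/

/-- A nonzero semisimple ring with involution `*` whose only
`*`-invariant idempotents are `0` and `1` is either a division ring, or `D × Dᵒᵖ` with
the involution exchanging the factors, or `Mat₂(F)` with a symplectic involution. -/
theorem stmt_19 {W : Type u} [Ring W] [Nontrivial W] [IsSemisimpleRing W]
    (star : W → W)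
    (hadd : ∀ u v : W, star (u + v) = star u + star v)
    (hone : star 1 = 1)
    (hmul : ∀ u v : W, star (u * v) = star v * star u)
    (hinvol : ∀ w : W, star (star w) = w)
    (hidem : ∀ e : W, e * e = e → star e = e → e = 0 ∨ e = 1) :
    -- (1) W is a division ring
    (∀ w : W, w ≠ 0 → IsUnit w) ∨
    -- (2) W ≅ D × Dᵒᵖ with the involution exchanging the factors
    (∃ (D : Type u) (instD : DivisionRing D),
      letI := instD
      ∃ φ : W ≃+* D × Dᵐᵒᵖ,
        (∀ d : D, (φ (star (φ.symm (d, 0)))).1 = 0) ∧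
        (∀ d : Dᵐᵒᵖ, (φ (star (φ.symm (0, d)))).2 = 0)) ∨
    -- (3) W ≅ Mat₂(F) with * the symplectic involution
    (∃ (F : Type u) (instF : Field F),
      letI := instF
      ∃ φ : W ≃+* Matrix (Fin 2) (Fin 2) F,
        ∀ w : W,
          φ (star w) =
            (Matrix.trace (φ w)) • (1 : Matrix (Fin 2) (Fin 2) F) - φ w) := by
  have h0 : star 0 = 0 := by simpa using hadd 0 0
  by_cases hdiv : ∀ w : W, w ≠ 0 → IsUnit w
  · exact Or.inl hdiv
  right
  have hiso : ∀ {e u : W}, IsPrim e → u * e = u → star u * u = 0 := fun he hue ↦ by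
    by_contra hu
    exact hdiv (isUnit_of_star_mul_ne_zero h0 hmul hinvol hidem he hue hu)
  obtain ⟨e, he⟩ := exists_isPrim W
  have he' := he.star h0 hmul hinvol
  have hes : star e * e = 0 := hiso he he.idem
  have hse : e * star e = 0 := by simpa [hinvol] using hiso he' he'.idem
  have h1 : e + star e = 1 := by
    refine (hidem _ ?_ ?_).resolve_left ?_
    · rw [mul_add, add_mul, add_mul, hes, hse, he.idem, he'.idem, add_zero, zero_add]
    · rw [hadd, hinvol, add_comm]
    · intro h
      apply he.ne
      have h2 := congrArg (e * ·) h
      simpa [mul_add, hse, he.idem] using h2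
  have hskew : ∀ w, star (star e * w * e) = -(star e * w * e) := by
    intro w
    -- Polarize `u* u = 0` at `u = e` and `u = w e`.
    have h2 := hiso (u := (w + 1) * e) he (by rw [mul_assoc, he.idem])
    have h3 := hiso (u := w * e) he (by rw [mul_assoc, he.idem])
    rw [hmul] at h3
    rw [add_mul, one_mul, hadd, hmul, add_mul, mul_add, mul_add, h3, hes, zero_add,
      add_zero] at h2
    rw [hmul, hmul, hinvol, ← mul_assoc, eq_neg_iff_add_eq_zero, ← h2, ← mul_assoc (star e) w e]
  by_cases h21 : ∀ w, star e * w * e = 0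
  · exact Or.inl (exists_equiv_prod hadd hmul hinvol he h1 h21)
  · obtain ⟨w₀, hw₀⟩ := not_forall.1 h21
    exact Or.inr (exists_equiv_matrix h0 hmul hinvol he h1 hskew hw₀)
end
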